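/- Identification from vanishing relative entropy: Let p : (0,∞) → ℝ be continuously differentiable with p'(ρ) > 0 for all ρ > 0, and let H(ρ) = ρ ∫_1^ρ p(z)/z² dz. Then (i) E(ρ,u | r,V) ≥ 0 for all ρ, r > 0 and u, V ∈ ℝ²; (ii) if X is a measure space with a (σ-finite) measure, ρ, r : X → (0,∞) and u, V : X → ℝ² are measurable, and r is bounded between two positive constants, then ∫_X E(ρ,u | r,V) ≤ 0 implies ρ = r almost everywhere and u = V almost everywhere on X. -/

import Mathlib

/-!
`H'(ρ) = ∫_1^ρ p(z)/z² dz + p(ρ)/ρ` has derivative `p'(ρ)/ρ > 0` on `(0, ∞)`, the two terms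
`±p(ρ)/ρ²` cancelling. Hence `H` is strictly convex there (`strictConvexOn_Hfun`) and lies strictly
above its tangent line at `r` except at `r` (`tangent_lt_Hfun`). The relative entropy is this gap
plus a kinetic term, so it is nonnegative and, for `ρ > 0`, vanishes only if `ρ = r` and `u = V`
(`eq_of_relEnt_nonpos`). A nonnegative measurable function with zero integral vanishes almost
everywhere, which transfers the pointwise rigidity to the measure space.
-/

open MeasureTheory Set

/-- The pressure potential `H(ρ) = ρ ∫_1^ρ p(z)/z² dz`. -/
noncomputable def Hfun (p : ℝ → ℝ) (ρ : ℝ) : ℝ := ρ * ∫ z in (1:ℝ)..ρ, p z / z ^ 2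

/-- The relative entropy `E(ρ,u | r,V) = ½ ρ|u−V|² + H(ρ) − H'(r)(ρ−r) − H(r)`. -/
noncomputable def relEnt (p : ℝ → ℝ) (ρ : ℝ) (u : ℝ × ℝ) (r : ℝ) (V : ℝ × ℝ) : ℝ :=
  1 / 2 * ρ * ((u.1 - V.1) ^ 2 + (u.2 - V.2) ^ 2) +
    (Hfun p ρ - deriv (Hfun p) r * (ρ - r) - Hfun p r)

lemma hasDerivAt_integral_div_sq {p : ℝ → ℝ} (hp : ContDiffOn ℝ 1 p (Ioi 0)) {ρ : ℝ}
    (hρ : 0 < ρ) :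
    HasDerivAt (fun s => ∫ z in (1:ℝ)..s, p z / z ^ 2) (p ρ / ρ ^ 2) ρ := by
  have hc : ContinuousOn (fun z => p z / z ^ 2) (Ioi 0) :=
    hp.continuousOn.div (by fun_prop) fun z hz => pow_ne_zero 2 (ne_of_gt hz)
  refine intervalIntegral.integral_hasDerivAt_right ?_ ?_ ?_
  · exact (hc.mono (ordConnected_Ioi.uIcc_subset one_pos hρ)).intervalIntegrable
  · exact hc.stronglyMeasurableAtFilter isOpen_Ioi ρ hρ
  · exact hc.continuousAt (isOpen_Ioi.mem_nhds hρ)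

lemma hasDerivAt_Hfun {p : ℝ → ℝ} (hp : ContDiffOn ℝ 1 p (Ioi 0)) {ρ : ℝ} (hρ : 0 < ρ) :
    HasDerivAt (Hfun p) ((∫ z in (1:ℝ)..ρ, p z / z ^ 2) + p ρ / ρ) ρ := by
  refine ((hasDerivAt_id' ρ).mul (hasDerivAt_integral_div_sq hp hρ)).congr_deriv ?_
  have := hρ.ne'
  field_simp

lemma strictConvexOn_Hfun {p : ℝ → ℝ} (hp : ContDiffOn ℝ 1 p (Ioi 0))
    (hp' : ∀ ρ : ℝ, 0 < ρ → 0 < deriv p ρ) : StrictConvexOn ℝ (Ioi 0) (Hfun p) := by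
  have hG : ∀ ρ ∈ Ioi (0:ℝ), HasDerivAt
      (fun s => (∫ z in (1:ℝ)..s, p z / z ^ 2) + p s / s) (deriv p ρ / ρ) ρ := by
    intro ρ hρ
    have hpd : HasDerivAt p (deriv p ρ) ρ :=
      ((hp.differentiableOn one_ne_zero).differentiableAt (isOpen_Ioi.mem_nhds hρ)).hasDerivAt
    have hne : ρ ≠ 0 := ne_of_gt hρ
    refine ((hasDerivAt_integral_div_sq hp hρ).add
      (hpd.div (hasDerivAt_id' ρ) hne)).congr_deriv ?_
    field_simp
    ring
  refine StrictMonoOn.strictConvexOn_of_deriv (convex_Ioi 0)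
    (fun x hx => (hasDerivAt_Hfun hp hx).continuousAt.continuousWithinAt) ?_
  rw [interior_Ioi]
  have hmono : StrictMonoOn (fun s => (∫ z in (1:ℝ)..s, p z / z ^ 2) + p s / s) (Ioi 0) := by
    refine strictMonoOn_of_deriv_pos (convex_Ioi 0)
      (fun x hx => (hG x hx).continuousAt.continuousWithinAt) fun x hx => ?_
    rw [interior_Ioi] at hx
    rw [(hG x hx).deriv]
    exact div_pos (hp' x hx) hx
  exact hmono.congr fun x hx => (hasDerivAt_Hfun hp hx).deriv.symm

lemma tangent_lt_Hfun {p : ℝ → ℝ} (hp : ContDiffOn ℝ 1 p (Ioi 0))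
    (hp' : ∀ ρ : ℝ, 0 < ρ → 0 < deriv p ρ) {ρ r : ℝ} (hρ : 0 < ρ) (hr : 0 < r) (hne : ρ ≠ r) :
    0 < Hfun p ρ - deriv (Hfun p) r * (ρ - r) - Hfun p r := by
  have hconv := strictConvexOn_Hfun hp hp'
  have hd : HasDerivAt (Hfun p) (deriv (Hfun p) r) r :=
    (hasDerivAt_Hfun hp hr).differentiableAt.hasDerivAt
  rcases lt_or_gt_of_ne hne with h | h
  · have := hconv.slope_lt_of_hasDerivAt hρ hr h hd
    rw [slope_def_field, div_lt_iff₀ (sub_pos.2 h)] at this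
    linarith
  · have := hconv.lt_slope_of_hasDerivAt hr hρ h hd
    rw [slope_def_field, lt_div_iff₀ (sub_pos.2 h)] at this
    linarith

lemma relEnt_nonneg {p : ℝ → ℝ} (hp : ContDiffOn ℝ 1 p (Ioi 0))
    (hp' : ∀ ρ : ℝ, 0 < ρ → 0 < deriv p ρ) {ρ r : ℝ} (hρ : 0 < ρ) (hr : 0 < r) (u V : ℝ × ℝ) :
    0 ≤ relEnt p ρ u r V := by
  have hpot : 0 ≤ Hfun p ρ - deriv (Hfun p) r * (ρ - r) - Hfun p r := by
    rcases eq_or_ne ρ r with rfl | h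
    · simp
    · exact (tangent_lt_Hfun hp hp' hρ hr h).le
  exact add_nonneg (by positivity) hpot

lemma eq_of_relEnt_nonpos {p : ℝ → ℝ} (hp : ContDiffOn ℝ 1 p (Ioi 0))
    (hp' : ∀ ρ : ℝ, 0 < ρ → 0 < deriv p ρ) {ρ r : ℝ} (hρ : 0 < ρ) (hr : 0 < r) {u V : ℝ × ℝ}
    (h : relEnt p ρ u r V ≤ 0) : ρ = r ∧ u = V := by
  have hkin : 0 ≤ 1 / 2 * ρ * ((u.1 - V.1) ^ 2 + (u.2 - V.2) ^ 2) := by positivity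
  unfold relEnt at h
  have hρr : ρ = r := by
    by_contra hne
    linarith [tangent_lt_Hfun hp hp' hρ hr hne]
  subst hρr
  refine ⟨rfl, ?_⟩
  have hsq : (u.1 - V.1) ^ 2 + (u.2 - V.2) ^ 2 ≤ 0 := by
    by_contra! hpos
    have : 0 < 1 / 2 * ρ * ((u.1 - V.1) ^ 2 + (u.2 - V.2) ^ 2) := by positivity
    linarith
  ext <;> nlinarith [sq_nonneg (u.1 - V.1), sq_nonneg (u.2 - V.2)]

/-- Since `p` is arbitrary on `(-∞, 0]`, `Hfun p` is only known to be continuous on `(0, ∞)`; this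
suffices because `f` takes positive values. -/
lemma measurable_Hfun_comp {p : ℝ → ℝ} (hp : ContDiffOn ℝ 1 p (Ioi 0)) {X : Type*}
    [MeasurableSpace X] {f : X → ℝ} (hf : Measurable f) (hpos : ∀ x, 0 < f x) :
    Measurable fun x => Hfun p (f x) := by
  have hc : ContinuousOn (Hfun p) (Ioi 0) := fun x hx =>
    (hasDerivAt_Hfun hp hx).continuousAt.continuousWithinAt
  exact hc.domRestrict.measurable.comp (hf.subtype_mk (h := hpos))

/-- Identification from vanishing relative entropy: (i) `E(ρ,u | r,V) ≥ 0`;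
(ii) if the integral of the relative entropy over a σ-finite measure space is `≤ 0`
(with `r` bounded between two positive constants), then `ρ = r` a.e. and `u = V` a.e. -/
theorem relEnt_identification (p : ℝ → ℝ) (hp : ContDiffOn ℝ 1 p (Set.Ioi 0))
    (hp' : ∀ ρ : ℝ, 0 < ρ → 0 < deriv p ρ) :
    (∀ (ρ r : ℝ), 0 < ρ → 0 < r → ∀ u V : ℝ × ℝ, 0 ≤ relEnt p ρ u r V) ∧
    (∀ (X : Type) (_ : MeasurableSpace X) (μ : Measure X), SigmaFinite μ →
      ∀ (ρ r : X → ℝ) (u V : X → ℝ × ℝ),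
        Measurable ρ → Measurable r → Measurable u → Measurable V →
        (∀ x, 0 < ρ x) → (∃ c C : ℝ, 0 < c ∧ ∀ x, c ≤ r x ∧ r x ≤ C) →
        (∫⁻ x, ENNReal.ofReal (relEnt p (ρ x) (u x) (r x) (V x)) ∂μ) ≤ 0 →
        (∀ᵐ x ∂μ, ρ x = r x) ∧ ∀ᵐ x ∂μ, u x = V x) := by
  refine ⟨fun ρ r hρ hr u V => relEnt_nonneg hp hp' hρ hr u V, ?_⟩
  rintro X _ μ - ρ r u V hρm hrm hum hVm hρ ⟨c, C, hc, hcC⟩ hint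
  have hr : ∀ x, 0 < r x := fun x => hc.trans_le (hcC x).1
  have hmeas : Measurable fun x => ENNReal.ofReal (relEnt p (ρ x) (u x) (r x) (V x)) := by
    have h1 := measurable_Hfun_comp hp hρm hρ
    have h2 := measurable_Hfun_comp hp hrm hr
    -- `measurable_deriv` holds for every function, so no regularity of `Hfun p` off `(0, ∞)` is used.
    have h3 : Measurable fun x => deriv (Hfun p) (r x) := (measurable_deriv _).comp hrm
    unfold relEnt
    fun_prop
  have hzero := (lintegral_eq_zero_iff hmeas).1 (le_antisymm hint zero_le)
  rw [← Filter.eventually_and]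
  filter_upwards [hzero] with x hx
  exact eq_of_relEnt_nonpos hp hp' (hρ x) (hr x) (ENNReal.ofReal_eq_zero.1 hx)
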